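/- For every x ∈ X and every r with d̂(x)/3 ≤ r ≤ 1, one has B(x, 1/(4 d̂(x))) ⊂ B_a(x,r) ⊂ B̂(x,r) ⊂ X̂ \ B̄(a, 1/(4r) − 1), where B̄(a,ρ) = {y ∈ X : d(y,a) ≤ ρ} (empty when ρ < 0). -/

import Mathlib

open Metric Set MeasureTheory Filter
open scoped ENNReal NNReal

noncomputable section

variable {X : Type*}

/-- The quasimetric `d_a` on the sphericalization `X̂ = X ∪ {∞}`, with `none` playing
the role of the point `∞`. -/
noncomputable def sphDist [MetricSpace X] (a : X) : Option X → Option X → ℝ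
  | some x, some y => dist x y / ((1 + dist x a) * (1 + dist y a))
  | some x, none => 1 / (1 + dist x a)
  | none, some y => 1 / (1 + dist y a)
  | none, none => 0

/-- The sum `Σ_{j=1}^k d_a(x_{j-1}, x_j)` along a finite sequence (list) in `X̂`. -/
noncomputable def chainSum [MetricSpace X] (a : X) : List (Option X) → ℝ
  | [] => 0
  | [_] => 0
  | x :: y :: l => sphDist a x y + chainSum a (y :: l)

/-- The sphericalized distance `d̂(x,y) = inf Σ_{j=1}^k d_a(x_{j-1},x_j)`, the infimum
being taken over all finite sequences `x = x_0, x_1, …, x_k = y` in `X̂`. -/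
noncomputable def sphHatDist [MetricSpace X] (a : X) (x y : Option X) : ℝ :=
  sInf {s : ℝ | ∃ L : List (Option X),
    L.head? = some x ∧ L.getLast? = some y ∧ chainSum a L = s}

/-- `d̂(x) = d̂(x,∞) = 1/(1+|x|)` for `x ∈ X`. -/
noncomputable def sphD [MetricSpace X] (a x : X) : ℝ := 1 / (1 + dist x a)

/-- The distance to `∞` on `X̂`, extended by `0` at `∞`. -/
def sphHeight [MetricSpace X] (a : X) : Option X → ℝ
  | some x => sphD a x
  | none => 0

theorem sphD_pos [MetricSpace X] (a x : X) : 0 < sphD a x := by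
  unfold sphD
  positivity

theorem sphDist_nonneg [MetricSpace X] (a : X) (p q : Option X) : 0 ≤ sphDist a p q := by
  cases p <;> cases q <;> simp only [sphDist] <;> positivity

theorem chainSum_nonneg [MetricSpace X] (a : X) (L : List (Option X)) : 0 ≤ chainSum a L := by
  induction L using chainSum.induct with
  | case1 => simp [chainSum]
  | case2 => simp [chainSum]
  | case3 p q l ih => exact add_nonneg (sphDist_nonneg a p q) ih

theorem sphHeight_le_add_sphDist [MetricSpace X] (a : X) (p q : Option X) :
    sphHeight a q ≤ sphHeight a p + sphDist a p q := by
  cases p with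
  | none => cases q <;> simp [sphHeight, sphDist, sphD]
  | some x =>
    cases q with
    | none =>
      simp only [sphHeight, sphDist, sphD]
      positivity
    | some y =>
      simp only [sphHeight, sphDist, sphD]
      have hx : 0 < 1 + dist x a := by positivity
      have hy : 0 < 1 + dist y a := by positivity
      have hsum : 1 / (1 + dist x a) + dist x y / ((1 + dist x a) * (1 + dist y a)) =
          (1 + dist y a + dist x y) / ((1 + dist x a) * (1 + dist y a)) := by
        field_simp
      rw [hsum, div_le_div_iff₀ hy (mul_pos hx hy), one_mul]
      exact mul_le_mul_of_nonneg_right (by linarith [dist_triangle x y a]) hy.le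

theorem sphHeight_le_add_chainSum [MetricSpace X] (a : X) (L : List (Option X))
    {p q : Option X} (hp : L.head? = some p) (hq : L.getLast? = some q) :
    sphHeight a q ≤ sphHeight a p + chainSum a L := by
  induction L using chainSum.induct generalizing p with
  | case1 => simp at hp
  | case2 => simp_all [chainSum]
  | case3 u v l ih =>
    obtain rfl : u = p := by simpa using hp
    have htail := ih (p := v) rfl (by simpa [List.getLast?_cons_cons] using hq)
    have hstep := sphHeight_le_add_sphDist a u v
    simp only [chainSum]
    linarith

theorem sphHatDist_le_sphDist [MetricSpace X] (a : X) (p q : Option X) :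
    sphHatDist a p q ≤ sphDist a p q := by
  refine csInf_le ⟨0, ?_⟩ ⟨[p, q], rfl, rfl, by simp [chainSum]⟩
  rintro s ⟨L, -, -, rfl⟩
  exact chainSum_nonneg a L

theorem sphHeight_le_add_sphHatDist [MetricSpace X] (a : X) (p q : Option X) :
    sphHeight a q ≤ sphHeight a p + sphHatDist a p q := by
  rw [← sub_le_iff_le_add']
  refine le_csInf ⟨_, [p, q], rfl, rfl, rfl⟩ ?_
  rintro s ⟨L, hp, hq, rfl⟩
  linarith [sphHeight_le_add_chainSum a L hp hq]

/-- For `x ∈ X` and `d̂(x)/3 ≤ r ≤ 1` one has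
`B(x, 1/(4 d̂(x))) ⊂ B_a(x,r) ⊂ B̂(x,r) ⊂ X̂ \ B̄(a, 1/(4r) − 1)`,
where `B̄(a,ρ) = {y ∈ X : d(y,a) ≤ ρ}` (empty when `ρ < 0`). -/
theorem statement8 [MetricSpace X]
    (hX : ¬ Bornology.IsBounded (Set.univ : Set X)) (a : X)
    (x : X) (r : ℝ) (h1 : sphD a x / 3 ≤ r) (h2 : r ≤ 1) :
    Option.some '' Metric.ball x (1 / (4 * sphD a x)) ⊆
      {y : Option X | sphDist a (some x) y < r} ∧
    {y : Option X | sphDist a (some x) y < r} ⊆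
      {y : Option X | sphHatDist a (some x) y < r} ∧
    {y : Option X | sphHatDist a (some x) y < r} ⊆
      Set.univ \ (Option.some '' Metric.closedBall a (1 / (4 * r) - 1)) := by
  have hr : 0 < r := lt_of_lt_of_le (div_pos (sphD_pos a x) three_pos) h1
  refine ⟨?_, fun y hy => (sphHatDist_le_sphDist a _ y).trans_lt hy, ?_⟩
  · rintro _ ⟨y, hy, rfl⟩
    refine lt_of_lt_of_le ?_ h1
    have hx : 0 < 1 + dist x a := by positivity
    have hy0 : 0 < 1 + dist y a := by positivity
    have hdist : dist x y < (1 + dist x a) / 4 := by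
      have hrad : 1 / (4 * sphD a x) = (1 + dist x a) / 4 := by
        unfold sphD
        field_simp
      rwa [mem_ball, dist_comm, hrad] at hy
    simp only [sphDist, sphD]
    rw [div_div, div_lt_div_iff₀ (mul_pos hx hy0) (mul_pos hx three_pos)]
    nlinarith [dist_triangle x y a]
  · rintro _ hy
    refine ⟨mem_univ _, ?_⟩
    rintro ⟨y, hya, rfl⟩
    have hheight : sphD a y ≤ sphD a x + sphHatDist a (some x) (some y) :=
      sphHeight_le_add_sphHatDist a (some x) (some y)
    have hlt : sphD a y < 4 * r := by
      have hy' : sphHatDist a (some x) (some y) < r := hy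
      linarith
    have hle : 1 + dist y a ≤ 1 / (4 * r) := by
      linarith [mem_closedBall.mp hya]
    have hge : 4 * r ≤ sphD a y :=
      (le_one_div (by positivity) (by positivity)).mpr hle
    exact hlt.not_ge hge
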